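/- Let ω ⊂ ℝⁿ be a measurable set of finite Lebesgue measure, let a, b ∈ L^∞(ω; ℝ) with a, b ≥ δ a.e. for a constant δ > 0, and let A⁺, A⁻ ∈ L^∞(ω; Sym(n)). Let ψ^k : ω → {−1, 1} be measurable with |{x ∈ ω : ψ^k(x) = −1}| → 0 as k → ∞, and set m^k := ((1−ψ^k)/2) a + ((1+ψ^k)/2) b. Let E^k, E ∈ L²(ω; Sym(n)) with E^k → E weakly in L²(ω; Sym(n)) and with {|E^k|²} uniformly integrable on ω. Set p^k := m^k E^k + A⁺ + ψ^k A⁻ and p := b E + A⁺ + A⁻, and assume ∫_ω p^k·E^k dx → ∫_ω p·E dx. Then E^k → E strongly in L²(ω; Sym(n)). -/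

import Mathlib

open MeasureTheory Filter Topology

noncomputable section

abbrev RV (n : ℕ) := Fin n → ℝ
abbrev Mat (n : ℕ) := Matrix (Fin n) (Fin n) ℝ
abbrev MField (n : ℕ) := RV n → Mat n
abbrev VField (n : ℕ) := RV n → RV n

/-- Frobenius inner product of matrices: `P·Q = ∑ᵢⱼ Pᵢⱼ Qᵢⱼ`. -/
def mdot {n : ℕ} (P Q : Mat n) : ℝ := ∑ i, ∑ j, P i j * Q i j

/-- A matrix field takes symmetric values a.e. on `s`. -/
def SymOn {n : ℕ} (E : MField n) (s : Set (RV n)) : Prop :=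
  ∀ᵐ x ∂(volume : Measure (RV n)), x ∈ s → ∀ i j, E x i j = E x j i

/-- Matrix field in L² on `s`: componentwise measurable and `|E|²` integrable on `s`. -/
def L2MOn {n : ℕ} (E : MField n) (s : Set (RV n)) : Prop :=
  (∀ i j, Measurable fun x => E x i j) ∧
    IntegrableOn (fun x => mdot (E x) (E x)) s volume

/-- Vector field in L² on `s`. -/
def L2VOn {n : ℕ} (u : VField n) (s : Set (RV n)) : Prop :=
  (∀ i, Measurable fun x => u x i) ∧
    IntegrableOn (fun x => ∑ i, u x i * u x i) s volume

/-- Scalar function in L∞ on `s`. -/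
def LinfROn {n : ℕ} (f : RV n → ℝ) (s : Set (RV n)) : Prop :=
  Measurable f ∧ ∃ M : ℝ, ∀ᵐ x ∂(volume : Measure (RV n)), x ∈ s → |f x| ≤ M

/-- Matrix field in L∞ on `s`. -/
def LinfMOn {n : ℕ} (F : MField n) (s : Set (RV n)) : Prop :=
  (∀ i j, Measurable fun x => F x i j) ∧
    ∃ M : ℝ, ∀ᵐ x ∂(volume : Measure (RV n)), x ∈ s → ∀ i j, |F x i j| ≤ M

/-- `E` is the weak symmetrized gradient of `u`:
for all `i j` and every test function `φ ∈ C_c^∞(ℝⁿ)`,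
`∫ Eᵢⱼ φ = -(1/2) ∫ (uᵢ ∂ⱼφ + uⱼ ∂ᵢφ)`. -/
def IsSymGrad {n : ℕ} (u : VField n) (E : MField n) : Prop :=
  ∀ i j, ∀ φ : RV n → ℝ, ContDiff ℝ (⊤ : ℕ∞) φ → HasCompactSupport φ →
    ∫ x, E x i j * φ x =
      -(1 / 2) * ∫ x, (u x i * fderiv ℝ φ x (Pi.single j 1) +
        u x j * fderiv ℝ φ x (Pi.single i 1))

/-- Admissible pair: the encoding of `v ∈ H¹₀(Ω;ℝⁿ)` together with its symmetrized
gradient `ε(v)`. -/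
structure AdmPair (n : ℕ) (Ω : Set (RV n)) where
  u : VField n
  E : MField n
  hu : L2VOn u Set.univ
  hE : L2MOn E Set.univ
  hsym : SymOn E Set.univ
  huz : ∀ᵐ x ∂(volume : Measure (RV n)), x ∉ Ω → u x = 0
  hEz : ∀ᵐ x ∂(volume : Measure (RV n)), x ∉ Ω → E x = 0
  hgrad : IsSymGrad u E

/-- Weak convergence in `L²(s; Sym(n))`. -/
def WeakL2M {n : ℕ} (Ek : ℕ → MField n) (E : MField n) (s : Set (RV n)) : Prop :=
  ∀ G : MField n, L2MOn G s →
    Tendsto (fun k => ∫ x in s, mdot (Ek k x) (G x)) atTop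
      (𝓝 (∫ x in s, mdot (E x) (G x)))

/-- Weak convergence in `L²(s; ℝⁿ)`. -/
def WeakL2V {n : ℕ} (uk : ℕ → VField n) (u : VField n) (s : Set (RV n)) : Prop :=
  ∀ g : VField n, L2VOn g s →
    Tendsto (fun k => ∫ x in s, ∑ i, uk k x i * g x i) atTop
      (𝓝 (∫ x in s, ∑ i, u x i * g x i))

/-- Weak* convergence in `L∞(s)`. -/
def WeakStarLinf {n : ℕ} (fk : ℕ → RV n → ℝ) (f : RV n → ℝ) (s : Set (RV n)) : Prop :=
  ∀ h : RV n → ℝ, IntegrableOn h s volume →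
    Tendsto (fun k => ∫ x in s, fk k x * h x) atTop (𝓝 (∫ x in s, f x * h x))

/-- Weak convergence in `L¹(s)`. -/
def WeakL1 {n : ℕ} (fk : ℕ → RV n → ℝ) (f : RV n → ℝ) (s : Set (RV n)) : Prop :=
  ∀ g : RV n → ℝ, Measurable g →
    (∃ M : ℝ, ∀ᵐ x ∂(volume : Measure (RV n)), x ∈ s → |g x| ≤ M) →
    Tendsto (fun k => ∫ x in s, fk k x * g x) atTop (𝓝 (∫ x in s, f x * g x))

/-- Uniform integrability of a family on `s`. -/
def UnifIntOn {n : ℕ} (fk : ℕ → RV n → ℝ) (s : Set (RV n)) : Prop :=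
  ∀ ε : ℝ, 0 < ε → ∃ η : ℝ, 0 < η ∧ ∀ A : Set (RV n), MeasurableSet A → A ⊆ s →
    volume A < ENNReal.ofReal η → ∀ k, ∫ x in A, |fk k x| < ε

/-- The double-well integrand `min{½a|F+C|², ½b|F+D|²}`. -/
def phaseMin {n : ℕ} (a b : RV n → ℝ) (C D : MField n) (F : MField n) (x : RV n) : ℝ :=
  min (1 / 2 * a x * mdot (F x + C x) (F x + C x))
      (1 / 2 * b x * mdot (F x + D x) (F x + D x))

/-- The nonconvex energy. -/
def Jfun {n : ℕ} (Ω : Set (RV n)) (a b : RV n → ℝ) (C D : MField n) (F : MField n) : ℝ :=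
  ∫ x in Ω, phaseMin a b C D F x

/-- The infimum `α` of the nonconvex problem over admissible pairs. -/
def alphaInf {n : ℕ} (Ω : Set (RV n)) (a b : RV n → ℝ) (C D : MField n) : ℝ :=
  sInf { r : ℝ | ∃ P : AdmPair n Ω, r = Jfun Ω a b C D P.E }

/-- The convexified energy `∫ [½χₐa|F+C|² + ½χᵦb|F+D|²]`. -/
def Jconv {n : ℕ} (Ω : Set (RV n)) (χa χb a b : RV n → ℝ) (C D : MField n)
    (F : MField n) : ℝ :=
  ∫ x in Ω, (1 / 2 * χa x * a x * mdot (F x + C x) (F x + C x)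
    + 1 / 2 * χb x * b x * mdot (F x + D x) (F x + D x))

/-- `A⁺ = (aC + bD)/2`. -/
def Aplus {n : ℕ} (a b : RV n → ℝ) (C D : MField n) : MField n :=
  fun x => (2 : ℝ)⁻¹ • (a x • C x + b x • D x)

/-- `A⁻ = (bD − aC)/2`. -/
def Aminus {n : ℕ} (a b : RV n → ℝ) (C D : MField n) : MField n :=
  fun x => (2 : ℝ)⁻¹ • (b x • D x - a x • C x)

/-- The integrand on `Ω \ Ω₀`:
`(ab(C−D)/(b−a))·F + ((bD−aC)/(b−a))·q + ab(|C|²−|D|²)/(2(b−a)) − t·ab|C−D|²/(2(b−a))`. -/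
def Goff {n : ℕ} (a b : RV n → ℝ) (C D : MField n) (F q : MField n) (t : RV n → ℝ)
    (x : RV n) : ℝ :=
  a x * b x / (b x - a x) * mdot (C x - D x) (F x) +
    (b x - a x)⁻¹ * mdot (b x • D x - a x • C x) (q x) +
    a x * b x * (mdot (C x) (C x) - mdot (D x) (D x)) / (2 * (b x - a x)) -
    t x * (a x * b x * mdot (C x - D x) (C x - D x) / (2 * (b x - a x)))

/-- `Ω₀ = {x ∈ Ω : a(x) = b(x)}`. -/
def Omega0 {n : ℕ} (Ω : Set (RV n)) (a b : RV n → ℝ) : Set (RV n) :=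
  {x ∈ Ω | a x = b x}

/-!
The energy identity `∫ b|f - f₀|² = ∫ ⟨b f + g, f⟩ - ∫ ⟨f, 2 b f₀ + g⟩ + ∫ ⟨b f₀, f₀⟩` splits the
weighted distance to the weak limit `f₀` into the work of the pure phase `b`, a term that weak
convergence controls, and a constant. Hence convergence of the work forces strong convergence as
soon as `b ≥ δ > 0`. The work of the mixture differs from that of phase `b` only on the set
`{ψᵏ = -1}`, by an integrand of size at most a multiple of `|Eᵏ|² + |A⁻||Eᵏ|`; since the measure of
this set tends to `0`, uniform integrability of `|Eᵏ|²` makes the difference disappear.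
-/

open scoped ENNReal RealInnerProductSpace

section InnerPairing

variable {X ι H : Type*} (𝕜 : Type*) {m : MeasurableSpace X} {μ : Measure X} [RCLike 𝕜]
  [NormedAddCommGroup H] [InnerProductSpace 𝕜 H] {p q : ℝ≥0∞} [ENNReal.HolderTriple p q 1]

lemma integrable_inner_of_memLp {f g : X → H} (hf : MemLp f p μ) (hg : MemLp g q μ) :
    Integrable (fun x => inner 𝕜 (f x) (g x)) μ :=
  memLp_one_iff_integrable.1 <| hf.of_bilin (inner 𝕜) 1 hg (hf.1.inner hg.1) <|
    .of_forall fun x => by simpa only [one_mul] using nnnorm_inner_le_nnnorm (f x) (g x)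

lemma enorm_integral_inner_le {f g : X → H} (hf : AEStronglyMeasurable f μ)
    (hg : AEStronglyMeasurable g μ) :
    ‖∫ x, inner 𝕜 (f x) (g x) ∂μ‖ₑ ≤ eLpNorm f p μ * eLpNorm g q μ :=
  calc ‖∫ x, inner 𝕜 (f x) (g x) ∂μ‖ₑ
      ≤ eLpNorm (fun x => inner 𝕜 (f x) (g x)) 1 μ := by
        rw [eLpNorm_one_eq_lintegral_enorm]
        exact enorm_integral_le_lintegral_enorm _
    _ ≤ eLpNorm f p μ * eLpNorm g q μ := by
        simpa only [ENNReal.coe_one, one_mul] using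
          eLpNorm_le_eLpNorm_mul_eLpNorm_of_nnnorm hf hg (inner 𝕜) 1 <|
            .of_forall fun x => by simpa only [one_mul] using nnnorm_inner_le_nnnorm (f x) (g x)

lemma tendsto_integral_inner_zero {l : Filter ι} {f g : ι → X → H} {C : ℝ≥0∞} (hC : C ≠ ∞)
    (hf : ∀ i, AEStronglyMeasurable (f i) μ) (hg : ∀ i, AEStronglyMeasurable (g i) μ)
    (hfC : ∀ᶠ i in l, eLpNorm (f i) p μ ≤ C)
    (hg0 : Tendsto (fun i => eLpNorm (g i) q μ) l (𝓝 0)) :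
    Tendsto (fun i => ∫ x, inner 𝕜 (f i x) (g i x) ∂μ) l (𝓝 0) := by
  rw [tendsto_zero_iff_enorm_tendsto_zero]
  have hCg : Tendsto (fun i => C * eLpNorm (g i) q μ) l (𝓝 0) := by
    simpa only [mul_zero] using ENNReal.Tendsto.const_mul hg0 (.inr hC)
  refine tendsto_of_tendsto_of_tendsto_of_le_of_le' tendsto_const_nhds hCg
    (.of_forall fun _ => zero_le) ?_
  filter_upwards [hfC] with i hi
  exact (enorm_integral_inner_le 𝕜 (hf i) (hg i)).trans (mul_le_mul_left hi _)

end InnerPairing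

section LpNorm

variable {X ι H : Type*} {m : MeasurableSpace X} {μ : Measure X} [NormedAddCommGroup H]

lemma tendsto_eLpNorm_indicator_zero_of_unifIntegrable {l : Filter ι} {f : ι → X → H} {p : ℝ≥0∞}
    {S : ι → Set X} (hf : UnifIntegrable f p μ) (hS : ∀ i, MeasurableSet (S i))
    (hμS : Tendsto (fun i => μ (S i)) l (𝓝 0)) :
    Tendsto (fun i => eLpNorm ((S i).indicator (f i)) p μ) l (𝓝 0) := by
  refine ENNReal.tendsto_nhds_zero.2 fun ε hε => ?_
  obtain ⟨ε', hε', hε'ε⟩ := ENNReal.lt_iff_exists_nnreal_btwn.1 hε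
  obtain ⟨δ, hδ, hfδ⟩ := hf (NNReal.coe_pos.2 (ENNReal.coe_pos.1 hε'))
  filter_upwards [ENNReal.tendsto_nhds_zero.1 hμS _ (ENNReal.ofReal_pos.2 hδ)] with i hi
  calc eLpNorm ((S i).indicator (f i)) p μ
      ≤ ENNReal.ofReal ε' := hfδ i (S i) (hS i) hi
    _ ≤ ε := by rw [ENNReal.ofReal_coe_nnreal]; exact hε'ε.le

lemma eLpNorm_two_eq_ofReal_sqrt_integral {f : X → H} (hf : MemLp f 2 μ) :
    eLpNorm f 2 μ = ENNReal.ofReal √(∫ x, ‖f x‖ ^ 2 ∂μ) := by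
  rw [hf.eLpNorm_eq_integral_rpow_norm two_ne_zero ENNReal.ofNat_ne_top, Real.sqrt_eq_rpow]
  norm_num

end LpNorm

section WeakConvergence

variable {X ι H : Type*} {m : MeasurableSpace X} {μ : Measure X} {l : Filter ι}
  [NormedAddCommGroup H] [InnerProductSpace ℝ H]

/-- Weak convergence `f i ⇀ f₀` in `L²(μ; H)` along `l`, for functions rather than classes in
`Lp`. Square integrability of `f i` and `f₀` is not part of the definition. -/
def WeaklyTendstoL2 (f : ι → X → H) (l : Filter ι) (f₀ : X → H) (μ : Measure X) : Prop :=
  ∀ g : X → H, MemLp g 2 μ →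
    Tendsto (fun i => ∫ x, ⟪f i x, g x⟫ ∂μ) l (𝓝 (∫ x, ⟪f₀ x, g x⟫ ∂μ))

lemma integral_mul_norm_sub_sq {b : X → ℝ} {f f₀ g : X → H} (hb : MemLp b ∞ μ)
    (hf : MemLp f 2 μ) (hf₀ : MemLp f₀ 2 μ) (hg : MemLp g 2 μ) :
    ∫ x, b x * ‖f x - f₀ x‖ ^ 2 ∂μ =
      (∫ x, ⟪b x • f x + g x, f x⟫ ∂μ) - (∫ x, ⟪f x, (2 : ℝ) • b x • f₀ x + g x⟫ ∂μ)
        + ∫ x, ⟪b x • f₀ x, f₀ x⟫ ∂μ := by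
  have hbf₀ : MemLp (fun x => b x • f₀ x) 2 μ := hf₀.smul hb
  have hquad : Integrable (fun x => ⟪b x • f x + g x, f x⟫) μ :=
    integrable_inner_of_memLp ℝ ((hf.smul hb).add hg) hf
  have hlin : Integrable (fun x => ⟪f x, (2 : ℝ) • b x • f₀ x + g x⟫) μ :=
    integrable_inner_of_memLp ℝ hf ((hbf₀.const_smul (2 : ℝ)).add hg)
  have hconst : Integrable (fun x => ⟪b x • f₀ x, f₀ x⟫) μ := integrable_inner_of_memLp ℝ hbf₀ hf₀
  rw [← integral_sub' hquad hlin, ← integral_add (hquad.sub hlin) hconst]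
  congr 1 with x
  simp only [Pi.sub_apply, ← real_inner_self_eq_norm_sq, inner_add_left, inner_add_right,
    inner_sub_left, inner_sub_right, real_inner_smul_left, real_inner_smul_right,
    real_inner_comm (f x)]
  ring

lemma tendsto_integral_norm_sub_sq_of_tendsto_energy {δ : ℝ} (hδ : 0 < δ) {b : X → ℝ}
    (hb : MemLp b ∞ μ) (hbδ : ∀ᵐ x ∂μ, δ ≤ b x) {f : ι → X → H} {f₀ g : X → H}
    (hf : ∀ i, MemLp (f i) 2 μ) (hf₀ : MemLp f₀ 2 μ) (hg : MemLp g 2 μ)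
    (hweak : WeaklyTendstoL2 f l f₀ μ)
    (henergy : Tendsto (fun i => ∫ x, ⟪b x • f i x + g x, f i x⟫ ∂μ) l
      (𝓝 (∫ x, ⟪b x • f₀ x + g x, f₀ x⟫ ∂μ))) :
    Tendsto (fun i => ∫ x, ‖f i x - f₀ x‖ ^ 2 ∂μ) l (𝓝 0) := by
  have htest : MemLp (fun x => (2 : ℝ) • b x • f₀ x + g x) 2 μ :=
    (MemLp.const_smul (hf₀.smul hb) (2 : ℝ)).add hg
  have hweighted : Tendsto (fun i => ∫ x, b x * ‖f i x - f₀ x‖ ^ 2 ∂μ) l (𝓝 0) := by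
    have hlim := (henergy.sub (hweak _ htest)).add_const (∫ x, ⟪b x • f₀ x, f₀ x⟫ ∂μ)
    rw [← integral_mul_norm_sub_sq hb hf₀ hf₀ hg] at hlim
    simpa only [← integral_mul_norm_sub_sq hb (hf _) hf₀ hg, sub_self, norm_zero, ne_eq,
      OfNat.ofNat_ne_zero, not_false_eq_true, zero_pow, mul_zero, integral_zero] using hlim
  have hsq (i : ι) : Integrable (fun x => ‖f i x - f₀ x‖ ^ 2) μ :=
    ((hf i).sub hf₀).integrable_norm_pow two_ne_zero
  refine squeeze_zero (fun i => integral_nonneg fun x => sq_nonneg _) (fun i => ?_)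
    (by simpa only [mul_zero] using hweighted.const_mul δ⁻¹)
  rw [← integral_const_mul]
  refine integral_mono_ae (hsq i) (((hsq i).smul_of_top_right hb).const_mul δ⁻¹) ?_
  filter_upwards [hbδ] with x hx
  rw [le_inv_mul_iff₀ hδ]
  exact mul_le_mul_of_nonneg_right hx (sq_nonneg _)

end WeakConvergence

section TwoPhase

variable {X ι H : Type*} [NormedAddCommGroup H] [InnerProductSpace ℝ H]

/-- The stress `p = m e + A⁺ + ψ A⁻` at the strain `e`, where `m = (1 - ψ)/2 a + (1 + ψ)/2 b` is the
modulus of the phase distribution `ψ`: phase `a` where `ψ = -1` and phase `b` where `ψ = 1`. -/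
def twoPhaseStress (a b ψ : X → ℝ) (Ap Am e : X → H) (x : X) : H :=
  ((1 - ψ x) / 2 * a x + (1 + ψ x) / 2 * b x) • e x + Ap x + ψ x • Am x

lemma twoPhaseStress_eq_add_indicator {a b ψ : X → ℝ} {Ap Am e : X → H} {x : X}
    (hψ : ψ x = -1 ∨ ψ x = 1) :
    twoPhaseStress a b ψ Ap Am e x = b x • e x + (Ap x + Am x)
      + {y | ψ y = -1}.indicator (fun y => (a y - b y) • e y + (-2 : ℝ) • Am y) x := by
  rcases hψ with h | h
  · rw [Set.indicator_of_mem (show x ∈ {y | ψ y = -1} from h), twoPhaseStress, h]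
    module
  · have hx : x ∉ {y | ψ y = -1} := fun h' => by linarith [h'.symm.trans h]
    rw [Set.indicator_of_notMem hx, twoPhaseStress, h]
    module

variable [MeasurableSpace X] {μ : Measure X} {l : Filter ι}

lemma tendsto_integral_inner_indicator_zero {c : X → ℝ} (hc : MemLp c ∞ μ) {g : X → H}
    (hg : MemLp g 2 μ) {f : ι → X → H} (hf : ∀ i, MemLp (f i) 2 μ) (hui : UnifIntegrable f 2 μ)
    {S : ι → Set X} (hS : ∀ i, MeasurableSet (S i)) (hμS : Tendsto (fun i => μ (S i)) l (𝓝 0)) :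
    Tendsto (fun i => ∫ x, ⟪(S i).indicator (fun y => c y • f i y + g y) x, f i x⟫ ∂μ)
      l (𝓝 0) := by
  have hfS : Tendsto (fun i => eLpNorm ((S i).indicator (f i)) 2 μ) l (𝓝 0) :=
    tendsto_eLpNorm_indicator_zero_of_unifIntegrable hui hS hμS
  -- With the indicator on both factors, smallness of `f i` on `S i` also bounds the left factor.
  have hmove (i : ι) (x : X) : ⟪(S i).indicator (fun y => c y • f i y + g y) x, f i x⟫ =
      ⟪(c • (S i).indicator (f i) + (S i).indicator g) x, (S i).indicator (f i) x⟫ := by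
    by_cases hx : x ∈ S i <;> simp [hx]
  simp only [hmove]
  have hfSm (i : ι) : AEStronglyMeasurable ((S i).indicator (f i)) μ := (hf i).1.indicator (hS i)
  have hgSm (i : ι) : AEStronglyMeasurable ((S i).indicator g) μ := hg.1.indicator (hS i)
  refine tendsto_integral_inner_zero ℝ (p := 2) (q := 2) (C := eLpNorm c ∞ μ + eLpNorm g 2 μ)
    (ENNReal.add_ne_top.2 ⟨hc.2.ne, hg.2.ne⟩) (fun i => (hc.1.smul (hfSm i)).add (hgSm i))
    hfSm ?_ hfS
  filter_upwards [ENNReal.tendsto_nhds_zero.1 hfS 1 one_pos] with i hi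
  calc eLpNorm (c • (S i).indicator (f i) + (S i).indicator g) 2 μ
      ≤ eLpNorm (c • (S i).indicator (f i)) 2 μ + eLpNorm ((S i).indicator g) 2 μ :=
        eLpNorm_add_le (hc.1.smul (hfSm i)) (hgSm i) one_le_two
    _ ≤ eLpNorm c ∞ μ * eLpNorm ((S i).indicator (f i)) 2 μ + eLpNorm g 2 μ :=
        add_le_add (eLpNorm_smul_le_eLpNorm_top_mul_eLpNorm 2 (hfSm i) c) (eLpNorm_indicator_le g)
    _ ≤ eLpNorm c ∞ μ + eLpNorm g 2 μ := by
        gcongr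
        exact mul_le_of_le_one_right' hi

lemma tendsto_integral_inner_of_tendsto_twoPhaseStress {a b : X → ℝ} (ha : MemLp a ∞ μ)
    (hb : MemLp b ∞ μ) {Ap Am : X → H} (hAp : MemLp Ap 2 μ) (hAm : MemLp Am 2 μ) {ψ : ι → X → ℝ}
    (hψm : ∀ i, Measurable (ψ i)) (hψ : ∀ i x, ψ i x = -1 ∨ ψ i x = 1)
    (hψ0 : Tendsto (fun i => μ {x | ψ i x = -1}) l (𝓝 0)) {f : ι → X → H}
    (hf : ∀ i, MemLp (f i) 2 μ) (hui : UnifIntegrable f 2 μ) {L : ℝ}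
    (hL : Tendsto (fun i => ∫ x, ⟪twoPhaseStress a b (ψ i) Ap Am (f i) x, f i x⟫ ∂μ) l (𝓝 L)) :
    Tendsto (fun i => ∫ x, ⟪b x • f i x + (Ap x + Am x), f i x⟫ ∂μ) l (𝓝 L) := by
  have hS (i : ι) : MeasurableSet {x | ψ i x = -1} :=
    measurableSet_eq_fun (hψm i) measurable_const
  have hc : MemLp (fun y => a y - b y) ∞ μ := ha.sub hb
  have hg : MemLp (fun y => (-2 : ℝ) • Am y) 2 μ := hAm.const_smul _
  have hexcess := tendsto_integral_inner_indicator_zero hc hg hf hui hS hψ0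
  have hlim := hL.sub hexcess
  rw [sub_zero] at hlim
  refine hlim.congr fun i => ?_
  have hpure : Integrable (fun x => ⟪b x • f i x + (Ap x + Am x), f i x⟫) μ :=
    integrable_inner_of_memLp ℝ (((hf i).smul hb).add (hAp.add hAm)) (hf i)
  have hexc : Integrable (fun x => ⟪{y | ψ i y = -1}.indicator
      (fun y => (a y - b y) • f i y + (-2 : ℝ) • Am y) x, f i x⟫) μ :=
    integrable_inner_of_memLp ℝ ((((hf i).smul hc).add hg).indicator (hS i)) (hf i)
  rw [sub_eq_iff_eq_add, ← integral_add hpure hexc]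
  simp only [twoPhaseStress_eq_add_indicator (hψ i _), inner_add_left]

theorem statement4_general {δ : ℝ} (hδ : 0 < δ) {a b : X → ℝ} (ha : MemLp a ∞ μ)
    (hb : MemLp b ∞ μ) (hbδ : ∀ᵐ x ∂μ, δ ≤ b x) {Ap Am : X → H} (hAp : MemLp Ap 2 μ)
    (hAm : MemLp Am 2 μ) {ψ : ι → X → ℝ} (hψm : ∀ i, Measurable (ψ i))
    (hψ : ∀ i x, ψ i x = -1 ∨ ψ i x = 1) (hψ0 : Tendsto (fun i => μ {x | ψ i x = -1}) l (𝓝 0))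
    {f : ι → X → H} {f₀ : X → H} (hf : ∀ i, MemLp (f i) 2 μ) (hf₀ : MemLp f₀ 2 μ)
    (hweak : WeaklyTendstoL2 f l f₀ μ) (hui : UnifIntegrable f 2 μ)
    (hwork : Tendsto (fun i => ∫ x, ⟪twoPhaseStress a b (ψ i) Ap Am (f i) x, f i x⟫ ∂μ) l
      (𝓝 (∫ x, ⟪b x • f₀ x + (Ap x + Am x), f₀ x⟫ ∂μ))) :
    Tendsto (fun i => ∫ x, ‖f i x - f₀ x‖ ^ 2 ∂μ) l (𝓝 0) :=
  tendsto_integral_norm_sub_sq_of_tendsto_energy hδ hb hbδ hf hf₀ (hAp.add hAm) hweak <|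
    tendsto_integral_inner_of_tendsto_twoPhaseStress ha hb hAp hAm hψm hψ hψ0 hf hui hwork

end TwoPhase

section Frobenius

variable {n : ℕ}

/-- The linear identification of matrices with the Euclidean space of their entries, under which
`mdot` is the inner product. Mathlib's `Matrix` carries no global norm. -/
def matToEuclidean (n : ℕ) : Mat n ≃ₗ[ℝ] EuclideanSpace ℝ (Fin n × Fin n) :=
  (LinearEquiv.curry ℝ ℝ (Fin n) (Fin n)).symm ≪≫ₗ (WithLp.linearEquiv 2 ℝ _).symm

lemma inner_matToEuclidean (P Q : Mat n) :
    ⟪matToEuclidean n P, matToEuclidean n Q⟫ = mdot P Q := by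
  simp only [PiLp.inner_apply, Fintype.sum_prod_type, RCLike.inner_apply', conj_trivial]
  rfl

lemma norm_sq_matToEuclidean (P : Mat n) : ‖matToEuclidean n P‖ ^ 2 = mdot P P := by
  rw [← real_inner_self_eq_norm_sq, inner_matToEuclidean]

lemma measurable_matToEuclidean_comp {F : MField n} (hF : ∀ i j, Measurable fun x => F x i j) :
    Measurable fun x => matToEuclidean n (F x) :=
  (WithLp.measurable_toLp 2 _).comp <| measurable_pi_iff.2 fun p => hF p.1 p.2

lemma measurable_matToEuclidean_symm_apply {g : RV n → EuclideanSpace ℝ (Fin n × Fin n)}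
    (hg : Measurable g) (i j : Fin n) : Measurable fun x => (matToEuclidean n).symm (g x) i j :=
  measurable_pi_iff.1 ((WithLp.measurable_ofLp 2 _).comp hg) (i, j)

lemma l2MOn_iff_memLp {F : MField n} {s : Set (RV n)} (hF : ∀ i j, Measurable fun x => F x i j) :
    L2MOn F s ↔ MemLp (fun x => matToEuclidean n (F x)) 2 (volume.restrict s) := by
  rw [memLp_two_iff_integrable_sq_norm (measurable_matToEuclidean_comp hF).aestronglyMeasurable]
  simp only [norm_sq_matToEuclidean]
  exact and_iff_right hF

lemma memLp_of_l2MOn {F : MField n} {s : Set (RV n)} (hF : L2MOn F s) :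
    MemLp (fun x => matToEuclidean n (F x)) 2 (volume.restrict s) :=
  (l2MOn_iff_memLp hF.1).1 hF

lemma memLp_top_of_linfROn {f : RV n → ℝ} {s : Set (RV n)} (hs : MeasurableSet s)
    (hf : LinfROn f s) : MemLp f ∞ (volume.restrict s) :=
  let ⟨hfm, M, hM⟩ := hf
  memLp_top_of_bound hfm.aestronglyMeasurable M <| (ae_restrict_iff' hs).2 hM

lemma memLp_of_linfMOn {F : MField n} {s : Set (RV n)} (hs : MeasurableSet s)
    (hsf : volume s < ⊤) (hF : LinfMOn F s) (p : ℝ≥0∞) :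
    MemLp (fun x => matToEuclidean n (F x)) p (volume.restrict s) := by
  have := Fact.mk hsf
  obtain ⟨hFm, M, hM⟩ := hF
  refine .of_bound (measurable_matToEuclidean_comp hFm).aestronglyMeasurable
    √(∑ _i : Fin n, ∑ _j : Fin n, M ^ 2) <| (ae_restrict_iff' hs).2 ?_
  filter_upwards [hM] with x hx hxs
  refine Real.le_sqrt_of_sq_le ?_
  rw [norm_sq_matToEuclidean]
  refine Finset.sum_le_sum fun i _ => Finset.sum_le_sum fun j _ => ?_
  rw [← sq, sq_le_sq]
  exact (hx hxs i j).trans (le_abs_self M)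

lemma weaklyTendstoL2_of_weakL2M {Ek : ℕ → MField n} {E : MField n} {s : Set (RV n)}
    (hE : WeakL2M Ek E s) :
    WeaklyTendstoL2 (fun k x => matToEuclidean n (Ek k x)) atTop (fun x => matToEuclidean n (E x))
      (volume.restrict s) := by
  intro g hg
  set G : MField n := fun x => (matToEuclidean n).symm (hg.1.mk g x) with hGdef
  have hGm (i j : Fin n) : Measurable fun x => G x i j :=
    measurable_matToEuclidean_symm_apply hg.1.stronglyMeasurable_mk.measurable i j
  have hgG : g =ᵐ[volume.restrict s] fun x => matToEuclidean n (G x) := by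
    simpa only [hGdef, LinearEquiv.apply_symm_apply] using hg.1.ae_eq_mk
  have hpair (F : MField n) :
      ∫ x in s, mdot (F x) (G x) = ∫ x in s, ⟪matToEuclidean n (F x), g x⟫ :=
    integral_congr_ae <| hgG.mono fun x hx => by
      simp only [hx, inner_matToEuclidean]
  simpa only [hpair] using hE G ((l2MOn_iff_memLp hGm).2 (hg.ae_eq hgG))

lemma unifIntegrable_of_unifIntOn {Ek : ℕ → MField n} {s : Set (RV n)} (hs : MeasurableSet s)
    (hEk : ∀ k, L2MOn (Ek k) s) (hui : UnifIntOn (fun k x => mdot (Ek k x) (Ek k x)) s) :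
    UnifIntegrable (fun k x => matToEuclidean n (Ek k x)) 2 (volume.restrict s) := by
  intro ε hε
  obtain ⟨η, hη, hEη⟩ := hui (ε ^ 2) (by positivity)
  refine ⟨η / 2, half_pos hη, fun k A hA hμA => ?_⟩
  rw [Measure.restrict_apply hA] at hμA
  have hsmall : volume (A ∩ s) < ENNReal.ofReal η :=
    hμA.trans_lt ((ENNReal.ofReal_lt_ofReal_iff hη).2 (half_lt_self hη))
  have henergy : ∫ x in A ∩ s, ‖matToEuclidean n (Ek k x)‖ ^ 2 < ε ^ 2 := by
    simpa only [← norm_sq_matToEuclidean, abs_sq] using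
      hEη (A ∩ s) (hA.inter hs) Set.inter_subset_right hsmall k
  have hmem : MemLp (fun x => matToEuclidean n (Ek k x)) 2 (volume.restrict (A ∩ s)) :=
    (memLp_of_l2MOn (hEk k)).mono_measure (Measure.restrict_mono_set _ Set.inter_subset_right)
  rw [eLpNorm_indicator_eq_eLpNorm_restrict hA, Measure.restrict_restrict hA,
    eLpNorm_two_eq_ofReal_sqrt_integral hmem]
  exact ENNReal.ofReal_le_ofReal ((Real.sqrt_le_left hε.le).2 henergy.le)

end Frobenius

/-- strong L² convergence on the set where the phase indicator
stabilizes; the analytic content of `ν_x = δ_{ε(u(x))}` on `ω₀`. -/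
theorem statement4 {n : ℕ} (ω : Set (RV n)) (hωm : MeasurableSet ω)
    (hωf : volume ω < ⊤)
    (δ : ℝ) (hδ : 0 < δ)
    (a b : RV n → ℝ) (ha : LinfROn a ω) (hb : LinfROn b ω)
    (haδ : ∀ᵐ x ∂(volume : Measure (RV n)), x ∈ ω → δ ≤ a x)
    (hbδ : ∀ᵐ x ∂(volume : Measure (RV n)), x ∈ ω → δ ≤ b x)
    (Ap Am : MField n) (hAp : LinfMOn Ap ω) (hAm : LinfMOn Am ω)
    (ψk : ℕ → RV n → ℝ) (hψm : ∀ k, Measurable (ψk k))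
    (hψv : ∀ k x, ψk k x = -1 ∨ ψk k x = 1)
    (hψ0 : Tendsto (fun k => volume {x ∈ ω | ψk k x = -1}) atTop (𝓝 0))
    (Ek : ℕ → MField n) (E : MField n)
    (hEkL2 : ∀ k, L2MOn (Ek k) ω) (hEL2 : L2MOn E ω)
    (hEw : WeakL2M Ek E ω)
    (hUI : UnifIntOn (fun k x => mdot (Ek k x) (Ek k x)) ω)
    -- ∫_ω pᵏ·Eᵏ → ∫_ω p·E with pᵏ = mᵏEᵏ + A⁺ + ψᵏA⁻ and p = bE + A⁺ + A⁻
    (hconv : Tendsto (fun k => ∫ x in ω,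
        mdot (((1 - ψk k x) / 2 * a x + (1 + ψk k x) / 2 * b x) • Ek k x
            + Ap x + ψk k x • Am x) (Ek k x)) atTop
      (𝓝 (∫ x in ω, mdot (b x • E x + Ap x + Am x) (E x)))) :
    Tendsto (fun k => ∫ x in ω, mdot (Ek k x - E x) (Ek k x - E x)) atTop (𝓝 0) := by
  have hψ0' : Tendsto (fun k => volume.restrict ω {x | ψk k x = -1}) atTop (𝓝 0) :=
    hψ0.congr fun k => by rw [Measure.restrict_apply' hωm, Set.inter_comm]; rfl
  have hstrong := statement4_general hδ (memLp_top_of_linfROn hωm ha) (memLp_top_of_linfROn hωm hb)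
    ((ae_restrict_iff' hωm).2 hbδ) (memLp_of_linfMOn hωm hωf hAp 2) (memLp_of_linfMOn hωm hωf hAm 2)
    hψm hψv hψ0' (fun k => memLp_of_l2MOn (hEkL2 k)) (memLp_of_l2MOn hEL2)
    (weaklyTendstoL2_of_weakL2M hEw) (unifIntegrable_of_unifIntOn hωm hEkL2 hUI)
    (by simpa only [twoPhaseStress, ← map_smul, ← map_add, inner_matToEuclidean, ← add_assoc]
      using hconv)
  simpa only [← map_sub, norm_sq_matToEuclidean] using hstrong

end
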